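/- arXiv:2008.13194 — 5 statements merged into one kernel-verified Lean document; each statement's English description precedes it below -/
import Mathlib

section
/- (Leinartas' decomposition.) Let K be a field, d ≥ 1, and let f, g ∈ K[x_1,…,x_d] with g ≠ 0. Let g = c·∏_{i=1}^m q_i^{e_i} be the factorization of g into pairwise non-associate irreducible polynomials q_i with exponents e_i ≥ 1 and a unit c ∈ K. Then there exist, for every subset S ⊆ {1,…,m}, a polynomial f_S ∈ K[x_1,…,x_d] and positive integers b_{S,i} for i ∈ S, such that in K(x_1,…,x_d) one has f/g = Σ_{S ⊆ {1,…,m}} f_S / ∏_{i∈S} q_i^{b_{S,i}}, and every subset S with f_S ≠ 0 satisfies: (1) the polynomials {q_i | i ∈ S} have a common zero in K̄^d; and (2) the family (q_i)_{i∈S} is algebraically independent over K. -/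
open MvPolynomial

/-- A family `q : σ → K[x_1,…,x_d]` of polynomials is *algebraically dependent* over `K`
if there is a nonzero polynomial `p ∈ K[y_i : i ∈ σ]` with `p(q) = 0`. -/
def AlgebraicallyDependent (K : Type*) [Field K] {d : ℕ} {σ : Type*}
    (q : σ → MvPolynomial (Fin d) K) : Prop :=
  ∃ p : MvPolynomial σ K, p ≠ 0 ∧ MvPolynomial.aeval q p = 0

/-- The canonical map from `K[x_1,…,x_d]` into its field of fractions `K(x_1,…,x_d)`. -/
noncomputable def toFrac (K : Type*) [Field K] (d : ℕ) :
    MvPolynomial (Fin d) K →+* FractionRing (MvPolynomial (Fin d) K) :=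
  algebraMap (MvPolynomial (Fin d) K) (FractionRing (MvPolynomial (Fin d) K))


/-- `MvPolynomial.expand n` is integral for `n > 0`. -/
lemma leinartas_expand_integral {σ K : Type*} [Field K] (n : ℕ) (hn : 0 < n)
    (p : MvPolynomial σ K) :
    ((expand n : MvPolynomial σ K →ₐ[K] MvPolynomial σ K) :
      MvPolynomial σ K →+* MvPolynomial σ K).IsIntegralElem p := by
  induction p using MvPolynomial.induction_on with
  | C a =>
    have h := RingHom.isIntegralElem_map
      ((expand n : MvPolynomial σ K →ₐ[K] MvPolynomial σ K) :
      MvPolynomial σ K →+* MvPolynomial σ K) (x := C a)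
    simpa using h
  | add p q hp hq => exact RingHom.IsIntegralElem.add _ hp hq
  | mul_X p i hp =>
    refine RingHom.IsIntegralElem.mul _ hp ?_
    refine ⟨Polynomial.X ^ n - Polynomial.C (X i), Polynomial.monic_X_pow_sub_C _ hn.ne', ?_⟩
    simp

/-- Powers of an algebraically dependent family are algebraically dependent. -/
lemma leinartas_dep_pow {σ K R : Type*} [Field K] [CommRing R] [Algebra K R]
    (q : σ → R) (p : MvPolynomial σ K) (hp : p ≠ 0) (hpq : aeval q p = 0)
    (n : ℕ) (hn : 0 < n) :
    ∃ p' : MvPolynomial σ K, p' ≠ 0 ∧ aeval (q ^ n) p' = 0 := by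
  obtain ⟨P, hP, hP0⟩ := leinartas_expand_integral n hn p
  have h := Ideal.comap_ne_bot_of_root_mem (I := RingHom.ker (aeval (R := K) q)) hp
    (by simpa [RingHom.mem_ker] using hpq) hP.ne_zero hP0
  obtain ⟨p', hp', hp0⟩ := Submodule.exists_mem_ne_zero_of_ne_bot h
  refine ⟨p', hp0, ?_⟩
  rw [Ideal.mem_comap, RingHom.mem_ker] at hp'
  rw [← aeval_expand]
  exact hp'

lemma leinartas_dep_ideal {σ K R : Type*} [Field K] [CommRing R] [Algebra K R] [Fintype σ]
    (q : σ → R) (p : MvPolynomial σ K) (hp : p ≠ 0) (hpq : aeval q p = 0) :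
    ∃ μ : σ → ℕ, ∏ i, q i ^ μ i ∈ Ideal.span (Set.range fun i => q i ^ (μ i + 1)) := by
  classical
  obtain ⟨μ, hμ, hmin⟩ := Finset.exists_min_image p.support (fun ν => ∑ i, ν i)
    (by simpa [Finset.nonempty_iff_ne_empty] using hp)
  refine ⟨μ, ?_⟩
  rw [aeval_def, eval₂_eq', ← Finset.add_sum_erase _ _ hμ] at hpq
  have hc : coeff μ p ≠ 0 := by simpa using hμ
  have hmem : algebraMap K R (coeff μ p) * ∏ i, q i ^ μ i ∈
      Ideal.span (Set.range fun i => q i ^ (μ i + 1)) := by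
    rw [eq_neg_of_add_eq_zero_left hpq]
    refine neg_mem (sum_mem fun ν hν => ?_)
    rw [Finset.mem_erase] at hν
    obtain ⟨i, hi⟩ : ∃ i, μ i < ν i := by
      by_contra! hcon
      have h1 := hmin ν hν.2
      have h2 : ∑ i, ν i = ∑ i, μ i :=
        le_antisymm (Finset.sum_le_sum fun i _ => hcon i) h1
      have h3 := (Finset.sum_eq_sum_iff_of_le (fun i _ => hcon i)).1 h2
      exact hν.1 (Finsupp.ext fun i => h3 i (Finset.mem_univ i))
    refine Ideal.mul_mem_left _ _ ?_
    rw [← Finset.mul_prod_erase _ _ (Finset.mem_univ i)]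
    refine Ideal.mul_mem_right _ _ ?_
    refine Ideal.mem_of_dvd _ (pow_dvd_pow (q i) (Nat.succ_le_of_lt hi)) ?_
    exact Ideal.subset_span ⟨i, rfl⟩
  have := Ideal.mul_mem_left _ (algebraMap K R (coeff μ p)⁻¹) hmem
  rwa [← mul_assoc, ← map_mul, inv_mul_cancel₀ hc, map_one, one_mul] at this

/-- The predicate describing admissible index sets. -/
def LeinartasGood {K : Type*} [Field K] {d m : ℕ} (q : Fin m → MvPolynomial (Fin d) K)
    (S : Finset (Fin m)) : Prop :=
  (∃ a : Fin d → AlgebraicClosure K, ∀ i ∈ S, MvPolynomial.aeval a (q i) = 0) ∧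
    (¬ AlgebraicallyDependent K (fun i : {i : Fin m // i ∈ S} => q i.1))

lemma leinartas_bad {K : Type*} [Field K] {d m : ℕ} (q : Fin m → MvPolynomial (Fin d) K)
    (S : Finset (Fin m)) (hS : ¬ LeinartasGood q S) (n : ℕ) (hn : 0 < n) :
    ∃ (μ : Fin m → ℕ) (h : Fin m → MvPolynomial (Fin d) K),
      ∏ i ∈ S, q i ^ μ i = ∑ i ∈ S, h i * q i ^ (μ i + n) := by
  classical
  suffices H : ∃ μ : {i : Fin m // i ∈ S} → ℕ, ∏ i, q i.1 ^ μ i ∈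
      Ideal.span (Set.range fun i : {i : Fin m // i ∈ S} => q i.1 ^ (μ i + n)) by
    obtain ⟨μ, hμ⟩ := H
    rw [Ideal.mem_span_range_iff_exists_fun] at hμ
    obtain ⟨c, hc⟩ := hμ
    refine ⟨fun i => if h : i ∈ S then μ ⟨i, h⟩ else 0,
      fun i => if h : i ∈ S then c ⟨i, h⟩ else 0, ?_⟩
    rw [← Finset.prod_coe_sort S, ← Finset.sum_coe_sort S]
    simpa using hc.symm
  by_cases hz : ∃ a : Fin d → AlgebraicClosure K, ∀ i ∈ S, MvPolynomial.aeval a (q i) = 0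
  · have hdep : AlgebraicallyDependent K (fun i : {i : Fin m // i ∈ S} => q i.1) := by
      by_contra hcon
      exact hS ⟨hz, hcon⟩
    obtain ⟨p, hp, hpq⟩ := hdep
    obtain ⟨p', hp', hpq'⟩ := leinartas_dep_pow _ p hp hpq n hn
    obtain ⟨μ, hμ⟩ := leinartas_dep_ideal _ p' hp' hpq'
    refine ⟨fun i => n * μ i, ?_⟩
    simpa only [Pi.pow_apply, ← pow_mul, mul_add, mul_one] using hμ
  · refine ⟨fun _ => 0, ?_⟩
    have htop : Ideal.span (Set.range fun i : {i : Fin m // i ∈ S} => q i.1) = ⊤ := by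
      by_contra hne
      obtain ⟨M, hM, hle⟩ := Ideal.exists_le_maximal _ hne
      obtain ⟨a, ha⟩ := eq_vanishingIdeal_singleton_of_isMaximal (AlgebraicClosure K) hM
      refine hz ⟨a, fun i hi => ?_⟩
      have : q i ∈ M := hle (Ideal.subset_span ⟨⟨i, hi⟩, rfl⟩)
      rw [ha, mem_vanishingIdeal_singleton_iff] at this
      exact this
    have := Ideal.span_pow_eq_top _ htop n
    rw [← Set.range_comp] at this
    simp only [zero_add]
    have h2 : Ideal.span (Set.range fun i : {i : Fin m // i ∈ S} => q i.1 ^ n) = ⊤ := this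
    rw [h2]
    trivial

/-- Fractions whose denominator is a power of `∏ i ∈ T, q i`. -/
noncomputable def leinartasMod {K : Type*} [Field K] {d m : ℕ}
    (q : Fin m → MvPolynomial (Fin d) K) (T : Finset (Fin m)) :
    Submodule (MvPolynomial (Fin d) K) (FractionRing (MvPolynomial (Fin d) K)) where
  carrier := {x | ∃ (n : ℕ) (h : MvPolynomial (Fin d) K),
    x * toFrac K d (∏ i ∈ T, q i) ^ n = toFrac K d h}
  zero_mem' := ⟨0, 0, by simp⟩
  add_mem' := by
    rintro x y ⟨n, h, hx⟩ ⟨k, l, hy⟩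
    refine ⟨n + k, h * (∏ i ∈ T, q i) ^ k + l * (∏ i ∈ T, q i) ^ n, ?_⟩
    rw [map_add, map_mul, map_mul, map_pow, map_pow, ← hx, ← hy]
    ring
  smul_mem' := by
    rintro r x ⟨n, h, hx⟩
    refine ⟨n, r * h, ?_⟩
    rw [map_mul, ← hx, Algebra.smul_def]
    simp only [toFrac]
    ring

lemma leinartas_toFrac_ne_zero {K : Type*} [Field K] {d : ℕ} {p : MvPolynomial (Fin d) K}
    (hp : p ≠ 0) : toFrac K d p ≠ 0 := by
  unfold toFrac
  simpa using hp

lemma leinartas_div_mem {K : Type*} [Field K] {d m : ℕ}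
    (q : Fin m → MvPolynomial (Fin d) K) (hq : ∀ i, q i ≠ 0) (T : Finset (Fin m))
    (b : Fin m → ℕ) (h : MvPolynomial (Fin d) K) :
    toFrac K d h / toFrac K d (∏ i ∈ T, q i ^ b i) ∈ leinartasMod q T := by
  have hle : ∀ i ∈ T, b i ≤ ∑ j ∈ T, b j := fun i hi =>
    Finset.single_le_sum (f := b) (fun _ _ => Nat.zero_le _) hi
  refine ⟨∑ j ∈ T, b j, h * ∏ i ∈ T, q i ^ (∑ j ∈ T, b j - b i), ?_⟩
  have hne : toFrac K d (∏ i ∈ T, q i ^ b i) ≠ 0 :=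
    leinartas_toFrac_ne_zero (Finset.prod_ne_zero_iff.2 fun i _ => pow_ne_zero _ (hq i))
  rw [div_mul_eq_mul_div, div_eq_iff hne, ← map_pow, ← map_mul, ← map_mul]
  congr 1
  rw [mul_assoc, ← Finset.prod_mul_distrib, ← Finset.prod_pow]
  congr 1
  refine Finset.prod_congr rfl fun i hi => ?_
  rw [← pow_add, Nat.sub_add_cancel (hle i hi)]

lemma leinartas_bump {K : Type*} [Field K] {d m : ℕ}
    (q : Fin m → MvPolynomial (Fin d) K) (T : Finset (Fin m))
    {x : FractionRing (MvPolynomial (Fin d) K)} (hx : x ∈ leinartasMod q T) :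
    ∃ (n : ℕ) (h : MvPolynomial (Fin d) K), 0 < n ∧
      x * toFrac K d (∏ i ∈ T, q i ^ n) = toFrac K d h := by
  obtain ⟨n, h, hx⟩ := hx
  refine ⟨n + 1, h * ∏ i ∈ T, q i, Nat.succ_pos _, ?_⟩
  rw [Finset.prod_pow, map_mul, ← hx, map_pow]
  ring

open Classical in
lemma leinartas_le {K : Type*} [Field K] {d m : ℕ}
    (q : Fin m → MvPolynomial (Fin d) K) (hq : ∀ i, q i ≠ 0) (S : Finset (Fin m)) :
    leinartasMod q S ≤ ⨆ T ∈ (Finset.univ : Finset (Finset (Fin m))),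
      (if LeinartasGood q T then leinartasMod q T else ⊥) := by
  induction S using Finset.strongInduction with
  | H S ih =>
  by_cases hS : LeinartasGood q S
  · refine le_trans (le_of_eq ?_) (le_biSup _ (Finset.mem_univ S))
    rw [if_pos hS]
  intro x hx
  obtain ⟨n, h, hn, hx⟩ := leinartas_bump q S hx
  obtain ⟨μ, c, hμ⟩ := leinartas_bad q S hS n hn
  have key : x = ∑ i ∈ S, toFrac K d (h * c i) /
      toFrac K d (∏ j ∈ S.erase i, q j ^ (μ j + n)) := by
    have hD : toFrac K d (∏ j ∈ S, q j ^ (μ j + n)) ≠ 0 :=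
      leinartas_toFrac_ne_zero (Finset.prod_ne_zero_iff.2 fun i _ => pow_ne_zero _ (hq i))
    apply mul_right_cancel₀ hD
    rw [Finset.sum_mul]
    have h1 : x * toFrac K d (∏ j ∈ S, q j ^ (μ j + n)) =
        toFrac K d (h * ∏ j ∈ S, q j ^ μ j) := by
      simp only [pow_add, Finset.prod_mul_distrib, map_mul, ← hx]
      ring
    rw [h1, hμ, Finset.mul_sum, map_sum]
    refine Finset.sum_congr rfl fun i hi => ?_
    have hE : toFrac K d (∏ j ∈ S.erase i, q j ^ (μ j + n)) ≠ 0 :=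
      leinartas_toFrac_ne_zero (Finset.prod_ne_zero_iff.2 fun i _ => pow_ne_zero _ (hq i))
    rw [div_mul_eq_mul_div, eq_div_iff hE, ← Finset.mul_prod_erase _ _ hi]
    simp only [map_mul]
    ring
  rw [key]
  exact sum_mem fun i hi => ih _ (Finset.erase_ssubset hi) (leinartas_div_mem q hq _ _ _)

/-- **Leinartas' decomposition.** Let `f, g ∈ K[x_1,…,x_d]` (`d ≥ 1`) with `g ≠ 0`, and let
`g = c·∏ q_i^{e_i}` be the factorization of `g` into pairwise non-associate irreducible
polynomials `q_i` with exponents `e_i ≥ 1` and a unit `c ∈ K`.  Then there is a decomposition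
`f/g = ∑_{S ⊆ {1,…,m}} f_S / ∏_{i ∈ S} q_i^{b_{S,i}}` in `K(x_1,…,x_d)`, with `b_{S,i} ≥ 1`,
such that every `S` with `f_S ≠ 0` satisfies: (1) the `q_i`, `i ∈ S`, have a common zero in
`K̄^d`; and (2) the family `(q_i)_{i ∈ S}` is algebraically independent over `K`. -/
theorem leinartas_decomposition {K : Type*} [Field K] {d m : ℕ} (hd : 1 ≤ d)
    (f g : MvPolynomial (Fin d) K) (hg : g ≠ 0)
    (c : K) (hc : c ≠ 0)
    (q : Fin m → MvPolynomial (Fin d) K)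
    (hq : ∀ i, Irreducible (q i))
    (hqa : ∀ i j, i ≠ j → ¬ Associated (q i) (q j))
    (e : Fin m → ℕ) (he : ∀ i, 1 ≤ e i)
    (hfact : g = C c * ∏ i, q i ^ e i) :
    ∃ (F : Finset (Fin m) → MvPolynomial (Fin d) K)
      (b : Finset (Fin m) → Fin m → ℕ),
      (∀ S : Finset (Fin m), ∀ i ∈ S, 0 < b S i) ∧
      (toFrac K d f / toFrac K d g
        = ∑ S : Finset (Fin m),
            toFrac K d (F S) / ∏ i ∈ S, toFrac K d (q i) ^ b S i) ∧
      (∀ S : Finset (Fin m), F S ≠ 0 →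
        (∃ a : Fin d → AlgebraicClosure K, ∀ i ∈ S, MvPolynomial.aeval a (q i) = 0) ∧
        (¬ AlgebraicallyDependent K (fun i : {i : Fin m // i ∈ S} => q i.1))) := by
  classical
  have hq0 : ∀ i, q i ≠ 0 := fun i => (hq i).ne_zero
  have hmem : toFrac K d f / toFrac K d g ∈ leinartasMod q Finset.univ := by
    have h := leinartas_div_mem q hq0 Finset.univ e (C c⁻¹ * f)
    convert h using 1
    have hP : toFrac K d (∏ i, q i ^ e i) ≠ 0 :=
      leinartas_toFrac_ne_zero (Finset.prod_ne_zero_iff.2 fun i _ => pow_ne_zero _ (hq0 i))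
    rw [div_eq_div_iff (leinartas_toFrac_ne_zero hg) hP, hfact, ← map_mul, ← map_mul]
    congr 1
    have hcc : (C c⁻¹ * C c : MvPolynomial (Fin d) K) = 1 := by
      rw [← C_mul, inv_mul_cancel₀ hc, C_1]
    linear_combination (-(f * ∏ i, q i ^ e i)) * hcc
  have h2 := leinartas_le q hq0 _ hmem
  rw [Submodule.mem_iSup_finset_iff_exists_sum] at h2
  obtain ⟨y, hy⟩ := h2
  have h3 : ∀ T : Finset (Fin m), ∃ (n : ℕ) (h : MvPolynomial (Fin d) K), 0 < n ∧
      (y T : FractionRing (MvPolynomial (Fin d) K)) * toFrac K d (∏ i ∈ T, q i ^ n)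
        = toFrac K d h ∧ (h ≠ 0 → LeinartasGood q T) := by
    intro T
    have hT := (y T).2
    generalize (y T : FractionRing (MvPolynomial (Fin d) K)) = z at hT ⊢
    by_cases hg : LeinartasGood q T
    · rw [if_pos hg] at hT
      obtain ⟨n, h, hn, hh⟩ := leinartas_bump q T hT
      exact ⟨n, h, hn, hh, fun _ => hg⟩
    · rw [if_neg hg, Submodule.mem_bot] at hT
      exact ⟨1, 0, one_pos, by rw [hT]; simp, fun h => absurd rfl h⟩
  choose n F hn hF hgood using h3
  refine ⟨F, fun S _ => n S, fun S i _ => hn S, ?_, fun S hS => hgood S hS⟩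
  rw [← hy]
  refine Finset.sum_congr rfl fun S _ => ?_
  have hP : toFrac K d (∏ i ∈ S, q i ^ n S) ≠ 0 :=
    leinartas_toFrac_ne_zero (Finset.prod_ne_zero_iff.2 fun i _ => pow_ne_zero _ (hq0 i))
  have hE : (∏ i ∈ S, toFrac K d (q i) ^ n S) = toFrac K d (∏ i ∈ S, q i ^ n S) := by
    simp only [map_prod, map_pow]
  rw [hE, eq_div_iff hP, hF]
end

section
/- (Jacobian criterion.) Let K be a field of characteristic zero. A family of m polynomials f_1,…,f_m ∈ K[x_1,…,x_d] is algebraically independent over K if and only if the Jacobian matrix (∂f_i/∂x_j)_{1≤i≤m, 1≤j≤d}, viewed as a matrix over the field of rational functions K(x_1,…,x_d), has rank m. -/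
open MvPolynomial

open scoped TensorProduct

lemma jc_chain {K A M σ : Type*} [Field K] [CommRing A] [Algebra K A] [Fintype σ]
    [AddCommGroup M] [Module A M] [Module K M] [IsScalarTower K A M] (D : Derivation K A M)
    (f : σ → A) (p : MvPolynomial σ K) :
    D (aeval f p) = ∑ i, aeval f (pderiv i p) • D (f i) := by
  classical
  induction p using MvPolynomial.induction_on with
  | C a => simp
  | add p q hp hq => simp [hp, hq, add_smul, Finset.sum_add_distrib]
  | mul_X p j hp =>
    simp only [map_mul, aeval_X, Derivation.leibniz, hp, pderiv_X, smul_eq_mul, map_add,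
      add_smul, Finset.sum_add_distrib, Finset.smul_sum, mul_smul]
    congr 1
    simp [Pi.single_apply, apply_ite, ite_smul]

lemma jc_const {K σ : Type*} [Field K] [CharZero K] (p : MvPolynomial σ K)
    (h : ∀ i, pderiv i p = 0) : ∃ c, p = C c := by
  classical
  refine ⟨coeff 0 p, ?_⟩
  ext n
  rw [coeff_C]
  split_ifs with h0
  · rw [h0]
  · obtain ⟨i, hi⟩ := Finsupp.ne_iff.mp (Ne.symm h0)
    have hi : n i ≠ 0 := by simpa using hi
    have := coeff_pderiv (i := i) p (n - Finsupp.single i 1)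
    rw [h i, coeff_zero] at this
    have e : n - Finsupp.single i 1 + Finsupp.single i 1 = n :=
      tsub_add_cancel_of_le (by simpa using Nat.one_le_iff_ne_zero.mpr hi)
    rw [e] at this
    rcases mul_eq_zero.mp this.symm with h | h
    · exact h
    · exact absurd h (Nat.cast_add_one_ne_zero _)

lemma jc_degree {K σ : Type*} [Field K] (p : MvPolynomial σ K) (i : σ)
    (h : pderiv i p ≠ 0) : (pderiv i p).totalDegree < p.totalDegree := by
  classical
  obtain ⟨s, hs, hd⟩ : ∃ s ∈ (pderiv i p).support,
      (pderiv i p).totalDegree = s.sum fun _ e => e := by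
    obtain ⟨s, hs, e⟩ := Finset.exists_mem_eq_sup (pderiv i p).support
      (MvPolynomial.support_nonempty.mpr h) (fun s => s.sum fun _ e => e)
    exact ⟨s, hs, e⟩
  rw [mem_support_iff, coeff_pderiv] at hs
  have h1 := le_totalDegree (p := p) (mem_support_iff.mpr (left_ne_zero_of_mul hs))
  rw [Finsupp.sum_add_index' (by simp) (by simp)] at h1
  simp at h1
  omega

lemma jc_etale {K L ι : Type*} [Field K] [CharZero K] [Field L] [Algebra K L] (v : ι → L)
    (hv : IsTranscendenceBasis K v) :
    LinearIndependent L (fun i => KaehlerDifferential.D K L (v i)) := by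
  let A := MvPolynomial ι K
  let : Algebra A L := (aeval v : MvPolynomial ι K →ₐ[K] L).toAlgebra
  have hmap : ∀ a : A, algebraMap A L a = aeval v a := fun _ => rfl
  have : IsScalarTower K A L := IsScalarTower.of_algebraMap_eq' (aeval v).comp_algebraMap.symm
  have hinj : Function.Injective (algebraMap A L) := hv.1
  have : FaithfulSMul A L := (faithfulSMul_iff_algebraMap_injective A L).mpr hinj
  have : Algebra.IsAlgebraic A L := by
    have := hv.isAlgebraic
    exact Algebra.IsAlgebraic.of_ringHom_of_comp_eq (S := Algebra.adjoin K (Set.range v)) (B := L)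
      (hv.1.aevalEquiv : MvPolynomial ι K →+* Algebra.adjoin K (Set.range v))
      (RingHom.id L) hv.1.aevalEquiv.surjective Function.injective_id (by ext <;> simp [hmap])
  let : Algebra (FractionRing A) L := FractionRing.liftAlgebra A L
  have : IsScalarTower A (FractionRing A) L := FractionRing.isScalarTower_liftAlgebra A L
  have : Algebra.IsAlgebraic (FractionRing A) L :=
    (IsFractionRing.comap_isAlgebraic_iff (A := A) (K := FractionRing A) (C := L)).mp inferInstance
  have : CharZero (FractionRing A) := charZero_of_injective_algebraMap (R := K)
    (FaithfulSMul.algebraMap_injective K (FractionRing A))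
  have : Algebra.FormallyEtale (FractionRing A) L := Algebra.FormallyEtale.of_isSeparable _ L
  have : Algebra.FormallyEtale A (FractionRing A) :=
    Algebra.FormallyEtale.of_isLocalization (nonZeroDivisors A)
  have : Algebra.FormallyEtale A L := .comp A (FractionRing A) L
  let b := ((KaehlerDifferential.mvPolynomialBasis K ι).baseChange L).map
    (KaehlerDifferential.tensorKaehlerEquivOfFormallyEtale K A L)
  convert b.linearIndependent with i
  simp [b, A, hmap]

lemma jc_indep {K L ι : Type*} [Field K] [CharZero K] [Field L] [Algebra K L] (v : ι → L)
    (hv : AlgebraicIndependent K v) :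
    LinearIndependent L (fun i => KaehlerDifferential.D K L (v i)) := by
  obtain ⟨t, ht, htb⟩ := exists_isTranscendenceBasis_superset hv.coe_range
  have := jc_etale _ htb
  exact this.comp (fun i : ι => (⟨v i, ht ⟨i, rfl⟩⟩ : t))
    (fun i j h => hv.injective (congrArg Subtype.val h))

/-- **Jacobian criterion.** Over a field `K` of characteristic zero, a family of `m` polynomials
`f_1,…,f_m ∈ K[x_1,…,x_d]` is algebraically independent over `K` if and only if the Jacobian
matrix `(∂f_i/∂x_j)`, viewed over the field of rational functions `K(x_1,…,x_d)`, has rank `m`. -/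
theorem jacobian_criterion {K : Type*} [Field K] [CharZero K] {d m : ℕ}
    (f : Fin m → MvPolynomial (Fin d) K) :
    ¬ AlgebraicallyDependent K f ↔
      (Matrix.of fun (i : Fin m) (j : Fin d) =>
        toFrac K d (MvPolynomial.pderiv j (f i))).rank = m := by
  classical
  set J := (Matrix.of fun (i : Fin m) (j : Fin d) =>
        toFrac K d (MvPolynomial.pderiv j (f i))) with hJ
  have hrank : J.rank = m ↔ LinearIndependent (FractionRing (MvPolynomial (Fin d) K)) J.row := by
    rw [linearIndependent_iff_card_eq_finrank_span, J.rank_eq_finrank_span_row, Set.finrank,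
      Fintype.card_fin, eq_comm]
  rw [hrank, Fintype.linearIndependent_iff]
  constructor
  · intro h c hc
    have hf : AlgebraicIndependent K f := by
      rw [algebraicIndependent_iff]
      intro p hp
      by_contra h0
      exact h ⟨p, h0, hp⟩
    have hv : AlgebraicIndependent K
        (fun i => algebraMap _ (FractionRing (MvPolynomial (Fin d) K)) (f i)) :=
      hf.map' (f := IsScalarTower.toAlgHom K (MvPolynomial (Fin d) K) _)
        (IsFractionRing.injective _ _)
    refine Fintype.linearIndependent_iff.mp (jc_indep _ hv) c ?_
    let D := (KaehlerDifferential.D K (FractionRing (MvPolynomial (Fin d) K))).compAlgebraMap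
      (MvPolynomial (Fin d) K)
    have hD : ∀ i, KaehlerDifferential.D K (FractionRing (MvPolynomial (Fin d) K))
        (algebraMap _ _ (f i)) = ∑ j, J i j • D (X j) := by
      intro i
      have := jc_chain D X (f i)
      simp only [aeval_X_left, AlgHom.id_apply] at this
      refine this.trans (Finset.sum_congr rfl fun j _ => ?_)
      simp [hJ, toFrac]
    simp only [hD, Finset.smul_sum]
    rw [Finset.sum_comm]
    refine Finset.sum_eq_zero fun j _ => ?_
    simp only [smul_smul, ← Finset.sum_smul]
    have := congrFun hc j
    simp only [Finset.sum_apply, Pi.smul_apply, smul_eq_mul, Matrix.row_apply,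
      Pi.zero_apply] at this
    rw [this, zero_smul]
  · intro hli ⟨p, hp0, hp⟩
    induction hn : p.totalDegree using Nat.strong_induction_on generalizing p with
    | _ n ih =>
    have key : ∀ i, aeval f (pderiv i p) = 0 := by
      intro i
      have := hli (fun i => toFrac K d (aeval f (pderiv i p))) ?_ i
      · exact (map_eq_zero_iff _ (IsFractionRing.injective _ _)).mp this
      · ext j
        have := jc_chain (pderiv j) f p
        rw [hp, map_zero] at this
        have := congrArg (toFrac K d) this
        simpa [hJ, map_sum, eq_comm] using this
    by_cases hz : ∀ i, pderiv i p = 0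
    · obtain ⟨c, rfl⟩ := jc_const p hz
      simp at hp hp0
      exact hp0 hp
    · push Not at hz
      obtain ⟨i, hi⟩ := hz
      exact ih _ (hn ▸ jc_degree p i hi) _ hi (key i) rfl
end

section
/- (Algebraic dependence decomposition step.) Let K be a field, let q_1,…,q_m ∈ K[x_1,…,x_d] be nonzero polynomials such that the family (q_1,…,q_m) is algebraically dependent over K, let e_1,…,e_m ≥ 1 be integers, and let f ∈ K[x_1,…,x_d]. Then in the field of fractions K(x_1,…,x_d), the rational function f / ∏_{i=1}^m q_i^{e_i} can be written as a finite sum Σ_{k=1}^N h_k / ∏_{i∈S_k} q_i^{b_{k,i}}, where each h_k ∈ K[x_1,…,x_d], each b_{k,i} is a positive integer, and each S_k is a proper subset of {1,…,m}. -/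
open MvPolynomial

/-- The reciprocals of products of powers over proper subsets of the denominators. -/
def properRecips {K : Type*} [Field K] {d m : ℕ} (q : Fin m → MvPolynomial (Fin d) K) :
    Set (FractionRing (MvPolynomial (Fin d) K)) :=
  {z | ∃ (S : Finset (Fin m)) (b : Fin m → ℕ), S ⊂ Finset.univ ∧ (∀ i ∈ S, 0 < b i) ∧
    z = (∏ i ∈ S, toFrac K d (q i) ^ b i)⁻¹}

/-- Every reciprocal of a monomial in the `q i` lies in the span of the proper ones:
well-founded induction on the exponent vector in the lexicographic order. -/
theorem inv_mem_span {K : Type*} [Field K] {d m : ℕ}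
    (q : Fin m → MvPolynomial (Fin d) K) (hq : ∀ i, q i ≠ 0)
    (hdep : AlgebraicallyDependent K q) (e : Lex (Fin m → ℕ)) :
    (∏ i, toFrac K d (q i) ^ (ofLex e i))⁻¹ ∈
      Submodule.span (MvPolynomial (Fin d) K) (properRecips q) := by
  obtain ⟨p, hp, hp0⟩ := hdep
  have hq' : ∀ i, toFrac K d (q i) ≠ 0 := fun i => by
    simpa [toFrac] using hq i
  obtain ⟨α, hα, hmin⟩ := Finset.exists_min_image p.support
    (fun β => toLex (fun i => β i)) (by simpa using hp)
  have hcα : p.coeff α ≠ 0 := by simpa using hα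
  induction e using WellFoundedLT.induction with
  | ind e ih =>
  by_cases h0 : ∃ j, ofLex e j = 0
  · obtain ⟨j, hj⟩ := h0
    apply Submodule.subset_span
    refine ⟨Finset.univ.filter (fun i => ofLex e i ≠ 0), ofLex e, ?_, ?_, ?_⟩
    · rw [Finset.ssubset_univ_iff]
      intro h
      have := Finset.mem_univ j
      rw [← h] at this
      exact (Finset.mem_filter.1 this).2 hj
    · intro i hi
      exact Nat.pos_of_ne_zero (Finset.mem_filter.1 hi).2
    · congr 1
      symm
      apply Finset.prod_subset (Finset.subset_univ _)
      intro i _ hi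
      have : ofLex e i = 0 := by
        by_contra hne
        exact hi (Finset.mem_filter.2 ⟨Finset.mem_univ i, hne⟩)
      rw [this, pow_zero]
  · push Not at h0
    have key : (∏ i, toFrac K d (q i) ^ (ofLex e i))⁻¹ =
        ∑ β ∈ p.support.erase α, (C (-(p.coeff α)⁻¹ * p.coeff β) *
          ∏ i, q i ^ (β i - (ofLex e i + α i))) •
          (∏ i, toFrac K d (q i) ^ (ofLex e i + α i - β i))⁻¹ := by
      have h1 : ∑ β ∈ p.support, toFrac K d (C (p.coeff β)) * ∏ i, toFrac K d (q i) ^ β i = 0 := by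
        have := congrArg (toFrac K d) hp0
        rw [aeval_def, eval₂_eq'] at this
        simpa [MvPolynomial.algebraMap_eq, map_sum, map_prod] using this
      rw [← Finset.add_sum_erase _ _ hα] at h1
      have h2 : ∀ β : Fin m →₀ ℕ, (C (-(p.coeff α)⁻¹ * p.coeff β) *
          ∏ i, q i ^ (β i - (ofLex e i + α i))) •
          (∏ i, toFrac K d (q i) ^ (ofLex e i + α i - β i))⁻¹ =
          -(toFrac K d (C (p.coeff α)))⁻¹ * (∏ i, toFrac K d (q i) ^ α i)⁻¹ *
            (∏ i, toFrac K d (q i) ^ (ofLex e i))⁻¹ *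
          (toFrac K d (C (p.coeff β)) * ∏ i, toFrac K d (q i) ^ β i) := by
        intro β
        have h3 : (∏ i, toFrac K d (q i) ^ (β i - (ofLex e i + α i))) *
            (∏ i, toFrac K d (q i) ^ (ofLex e i + α i - β i))⁻¹ =
            (∏ i, toFrac K d (q i) ^ α i)⁻¹ *
            (∏ i, toFrac K d (q i) ^ (ofLex e i))⁻¹ * ∏ i, toFrac K d (q i) ^ β i := by
          simp only [← Finset.prod_inv_distrib, ← Finset.prod_mul_distrib]
          refine Finset.prod_congr rfl fun i _ => ?_
          have := hq' i
          field_simp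
          simp only [← pow_add]
          congr 1
          omega
        have h4 : toFrac K d (C (p.coeff α)⁻¹) = (toFrac K d (C (p.coeff α)))⁻¹ := by
          apply eq_inv_of_mul_eq_one_left
          rw [← map_mul, ← C_mul, inv_mul_cancel₀ hcα, C_1, map_one]
        rw [Algebra.smul_def]
        change toFrac K d _ * _ = _
        rw [map_mul, map_prod]
        simp only [map_pow]
        rw [mul_assoc, h3, C_mul, C_neg, map_mul, map_neg, h4]
        ring
      rw [Finset.sum_congr rfl (fun β _ => h2 β), ← Finset.mul_sum,
        eq_neg_of_add_eq_zero_right h1]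
      have hA : toFrac K d (C (p.coeff α)) ≠ 0 := by simpa [toFrac] using hcα
      have hB : ∏ i, toFrac K d (q i) ^ α i ≠ 0 :=
        Finset.prod_ne_zero_iff.2 fun i _ => pow_ne_zero _ (hq' i)
      field_simp
    rw [key]
    refine Submodule.sum_mem _ fun β hβ => Submodule.smul_mem _ _ ?_
    refine ih (toLex fun i => ofLex e i + α i - β i) ?_
    have hβ' := Finset.mem_erase.1 hβ
    have hlt : toLex (fun i => α i) < toLex (fun i => β i) := by
      refine lt_of_le_of_ne (hmin β hβ'.2) fun h => hβ'.1 ?_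
      ext i
      exact (congrFun (toLex.injective h) i).symm
    obtain ⟨j, hj1, hj2⟩ := hlt
    refine ⟨j, fun i hi => ?_, ?_⟩
    · have := hj1 i hi
      change α i = β i at this
      change ofLex e i + α i - β i = ofLex e i
      omega
    · change α j < β j at hj2
      change ofLex e j + α j - β j < ofLex e j
      have := h0 j
      omega

/-- **Algebraic dependence decomposition step.** If the nonzero polynomials `q_1,…,q_m` are
algebraically dependent over `K`, `e_i ≥ 1`, and `f ∈ K[x_1,…,x_d]`, then in `K(x_1,…,x_d)`
the rational function `f / ∏ q_i^{e_i}` is a finite sum `∑_k h_k / ∏_{i ∈ S_k} q_i^{b_{k,i}}`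
with `h_k ∈ K[x_1,…,x_d]`, `b_{k,i} ≥ 1`, and `S_k ⊊ {1,…,m}` proper subsets. -/
theorem alg_depend_decomp_step {K : Type*} [Field K] {d m : ℕ}
    (q : Fin m → MvPolynomial (Fin d) K) (hq : ∀ i, q i ≠ 0)
    (hdep : AlgebraicallyDependent K q)
    (e : Fin m → ℕ) (he : ∀ i, 1 ≤ e i) (f : MvPolynomial (Fin d) K) :
    ∃ (N : ℕ) (h : Fin N → MvPolynomial (Fin d) K)
      (S : Fin N → Finset (Fin m)) (b : Fin N → Fin m → ℕ),
      (∀ k, S k ⊂ Finset.univ) ∧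
      (∀ k, ∀ i ∈ S k, 0 < b k i) ∧
      toFrac K d f / ∏ i, toFrac K d (q i) ^ e i
        = ∑ k, toFrac K d (h k) / ∏ i ∈ S k, toFrac K d (q i) ^ b k i := by
  have hmem := Submodule.smul_mem _ f (inv_mem_span q hq hdep (toLex e))
  rw [Submodule.mem_span_set'] at hmem
  obtain ⟨N, h, g, hg⟩ := hmem
  choose S b hS hb hgz using fun k => (g k).2
  refine ⟨N, h, S, b, hS, hb, ?_⟩
  rw [div_eq_mul_inv]
  rw [Algebra.smul_def] at hg
  refine hg.symm.trans (Finset.sum_congr rfl fun k _ => ?_)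
  rw [Algebra.smul_def, hgz k, div_eq_mul_inv]
  rfl
end

section
/- (Existence and uniqueness of the reduced normal form.) Let K be a field, fix a global monomial ordering on K[x_1,…,x_d], and let I ⊆ K[x_1,…,x_d] be an ideal. Then for every f ∈ K[x_1,…,x_d] there exists exactly one polynomial r ∈ K[x_1,…,x_d] such that f − r ∈ I and r is reduced with respect to I. -/
open MvPolynomial

/-- A *global monomial ordering* on `K[x_1,…,x_d]`: a (strict) total ordering on the monomials
`x^α`, `α ∈ ℕ^d` (identified with `Fin d →₀ ℕ`), compatible with multiplication, and satisfying
`1 < x_i` for every variable `x_i`. -/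
structure GlobalMonomialOrder (d : ℕ) where
  lt : (Fin d →₀ ℕ) → (Fin d →₀ ℕ) → Prop
  trichotomous : ∀ a b, lt a b ∨ a = b ∨ lt b a
  irrefl : ∀ a, ¬ lt a a
  trans : ∀ a b c, lt a b → lt b c → lt a c
  add_right : ∀ a b c, lt a b → lt (a + c) (b + c)
  global : ∀ i : Fin d, lt 0 (Finsupp.single i 1)

/-- `μ` is the leading monomial `L(f)` of `f` with respect to the ordering `o`. -/
def IsLeadMonomial {K : Type*} [Field K] {d : ℕ} (o : GlobalMonomialOrder d)
    (f : MvPolynomial (Fin d) K) (μ : Fin d →₀ ℕ) : Prop :=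
  μ ∈ f.support ∧ ∀ ν ∈ f.support, ν ≠ μ → o.lt ν μ

/-- `r` is *reduced* with respect to an ideal `I`: no monomial occurring in `r` is divisible by
the leading monomial of any nonzero element of `I`. -/
def ReducedWrt {K : Type*} [Field K] {d : ℕ} (o : GlobalMonomialOrder d)
    (I : Ideal (MvPolynomial (Fin d) K)) (r : MvPolynomial (Fin d) K) : Prop :=
  ∀ μ ∈ r.support, ∀ h ∈ I, h ≠ 0 → ∀ L, IsLeadMonomial o h L → ¬ L ≤ μ

namespace GlobalMonomialOrder

theorem lt_single_add {d : ℕ} (o : GlobalMonomialOrder d) (i : Fin d) (a : Fin d →₀ ℕ) :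
    o.lt a (a + Finsupp.single i 1) := by
  have := o.add_right _ _ a (o.global i)
  rwa [zero_add, add_comm] at this

theorem eq_or_lt_add {d : ℕ} (o : GlobalMonomialOrder d) (c : Fin d →₀ ℕ) :
    ∀ a, a = a + c ∨ o.lt a (a + c) := by
  classical
  induction c using Finsupp.induction_linear with
  | zero => intro a; left; simp
  | add f g hf hg =>
    intro a
    rw [← add_assoc]
    rcases hf a with h | h
    · rw [← h]; exact hg a
    · right
      rcases hg (a + f) with h' | h'
      · rw [← h']; exact h
      · exact o.trans _ _ _ h h'
  | single i n =>
    induction n with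
    | zero => intro a; left; simp
    | succ n ih =>
      intro a
      right
      rw [Finsupp.single_add, ← add_assoc]
      rcases ih a with h | h
      · rw [← h]; exact o.lt_single_add i a
      · exact o.trans _ _ _ h (o.lt_single_add i _)

theorem wf {d : ℕ} (o : GlobalMonomialOrder d) : WellFounded o.lt := by
  haveI : IsStrictOrder _ o.lt := { irrefl := o.irrefl, trans := o.trans }
  rw [RelEmbedding.wellFounded_iff_isEmpty]
  refine ⟨fun g => ?_⟩
  obtain ⟨m, n, hmn, hle⟩ := wellQuasiOrdered_le (α := Fin d →₀ ℕ) g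
  obtain ⟨c, hc⟩ := exists_add_of_le hle
  have h1 : o.lt (g n) (g m) := g.map_rel_iff.2 hmn
  rcases o.eq_or_lt_add c (g m) with h | h
  · rw [hc, ← h] at h1; exact o.irrefl _ h1
  · rw [← hc] at h; exact o.irrefl _ (o.trans _ _ _ h h1)

theorem exists_max {d : ℕ} (o : GlobalMonomialOrder d) (s : Finset (Fin d →₀ ℕ))
    (hs : s.Nonempty) : ∃ μ ∈ s, ∀ ν ∈ s, ν ≠ μ → o.lt ν μ := by
  classical
  induction hs using Finset.Nonempty.cons_induction with
  | singleton a => exact ⟨a, by simp, by simp⟩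
  | cons a s ha hs ih =>
    obtain ⟨μ, hμ, hmax⟩ := ih
    rcases o.trichotomous a μ with h | h | h
    · refine ⟨μ, by simp [hμ], fun ν hν hne => ?_⟩
      rcases Finset.mem_cons.1 hν with rfl | hν
      · exact h
      · exact hmax ν hν hne
    · exact absurd (h ▸ hμ) ha
    · refine ⟨a, by simp, fun ν hν hne => ?_⟩
      rcases Finset.mem_cons.1 hν with rfl | hν
      · exact absurd rfl hne
      · by_cases e : ν = μ
        · rw [e]; exact h
        · exact o.trans _ _ _ (hmax ν hν e) h

end GlobalMonomialOrder

/-- The polynomials having a normal form. -/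
def normalFormSubmodule {K : Type*} [Field K] {d : ℕ} (o : GlobalMonomialOrder d)
    (I : Ideal (MvPolynomial (Fin d) K)) : Submodule K (MvPolynomial (Fin d) K) where
  carrier := {f | ∃ r, f - r ∈ I ∧ ReducedWrt o I r}
  zero_mem' := ⟨0, by simp, by intro μ hμ; simp at hμ⟩
  add_mem' := by
    classical
    rintro f g ⟨r, hr, hr'⟩ ⟨s, hs, hs'⟩
    refine ⟨r + s, ?_, ?_⟩
    · rw [add_sub_add_comm]; exact I.add_mem hr hs
    · intro μ hμ
      rcases Finset.mem_union.1 (MvPolynomial.support_add hμ) with h | h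
      · exact hr' μ h
      · exact hs' μ h
  smul_mem' := by
    rintro c f ⟨r, hr, hr'⟩
    refine ⟨c • r, ?_, fun μ hμ => hr' μ (MvPolynomial.support_smul hμ)⟩
    rw [← smul_sub, MvPolynomial.smul_eq_C_mul]
    exact I.mul_mem_left _ hr

theorem mem_of_monomials {K : Type*} [Field K] {d : ℕ}
    (N : Submodule K (MvPolynomial (Fin d) K)) (f : MvPolynomial (Fin d) K)
    (h : ∀ μ ∈ f.support, monomial μ (1 : K) ∈ N) : f ∈ N := by
  rw [← MvPolynomial.support_sum_monomial_coeff f]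
  refine N.sum_mem fun μ hμ => ?_
  have := N.smul_mem (coeff μ f) (h μ hμ)
  rwa [MvPolynomial.smul_monomial, smul_eq_mul, mul_one] at this

theorem monomial_mem_normalForm {K : Type*} [Field K] {d : ℕ} (o : GlobalMonomialOrder d)
    (I : Ideal (MvPolynomial (Fin d) K)) (α : Fin d →₀ ℕ) :
    monomial α (1 : K) ∈ normalFormSubmodule o I := by
  classical
  induction α using o.wf.induction with
  | _ α ih =>
  by_cases hred : ReducedWrt o I (monomial α (1 : K))
  · exact ⟨_, by simp, hred⟩
  · unfold ReducedWrt at hred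
    push Not at hred
    obtain ⟨μ, hμ, h, hI, h0, L, ⟨hL, hmax⟩, hle⟩ := hred
    have hμα : μ = α := by
      simpa using MvPolynomial.support_monomial_subset hμ
    subst hμα
    obtain ⟨c, rfl⟩ := exists_add_of_le hle
    have hk : monomial c (coeff L h)⁻¹ * h ∈ I := I.mul_mem_left _ hI
    have hkN : monomial c (coeff L h)⁻¹ * h ∈ normalFormSubmodule o I :=
      ⟨0, by simpa using hk, by intro μ hμ; simp at hμ⟩
    rw [← sub_add_cancel (monomial (L + c) (1 : K)) (monomial c (coeff L h)⁻¹ * h)]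
    refine Submodule.add_mem _ (mem_of_monomials _ _ fun ν hν => ih ν ?_) hkN
    have hLc : coeff L h ≠ 0 := MvPolynomial.mem_support_iff.1 hL
    rw [MvPolynomial.mem_support_iff, coeff_sub, coeff_monomial, coeff_monomial_mul'] at hν
    by_cases e : L + c = ν
    · subst e
      exfalso
      apply hν
      simp [hLc]
    · rw [if_neg e] at hν
      by_cases hc : c ≤ ν
      · obtain ⟨ρ, rfl⟩ := exists_add_of_le hc
        rw [if_pos hc, add_tsub_cancel_left] at hν
        have hρ : coeff ρ h ≠ 0 := by
          intro h; apply hν; simp [h]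
        rw [add_comm c ρ]
        refine o.add_right _ _ _ (hmax ρ (MvPolynomial.mem_support_iff.2 hρ) ?_)
        rintro rfl
        exact e (add_comm _ _)
      · simp [hc] at hν

/-- **Existence and uniqueness of the reduced normal form.** Given a global monomial ordering
on `K[x_1,…,x_d]` and an ideal `I`, every polynomial `f` has exactly one normal form: a
polynomial `r` with `f − r ∈ I` which is reduced with respect to `I`. -/
theorem existsUnique_reduced_normal_form {K : Type*} [Field K] {d : ℕ}
    (o : GlobalMonomialOrder d) (I : Ideal (MvPolynomial (Fin d) K))
    (f : MvPolynomial (Fin d) K) :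
    ∃! r : MvPolynomial (Fin d) K, f - r ∈ I ∧ ReducedWrt o I r := by
  classical
  obtain ⟨r, hr, hr'⟩ : f ∈ normalFormSubmodule o I :=
    mem_of_monomials _ _ fun μ _ => monomial_mem_normalForm o I μ
  refine ⟨r, ⟨hr, hr'⟩, ?_⟩
  rintro s ⟨hs, hs'⟩
  by_contra hne
  have hI : s - r ∈ I := by
    have := I.sub_mem hr hs
    rwa [sub_sub_sub_cancel_left] at this
  have h0 : s - r ≠ 0 := sub_ne_zero.2 hne
  obtain ⟨L, hL⟩ := o.exists_max (s - r).support
    (Finset.nonempty_iff_ne_empty.2 fun h => h0 (MvPolynomial.support_eq_empty.1 h))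
  rcases Finset.mem_union.1 (MvPolynomial.support_sub _ s r hL.1) with h | h
  · exact hs' L h _ hI h0 L hL le_rfl
  · exact hr' L h _ hI h0 L hL le_rfl
end

section
/- (Termination of the simplified algebraic-dependence decomposition.) Let m ≥ 1, let α ∈ ℕ^m, and let B ⊆ ℕ^m be a finite set with α ∉ B such that: every β ∈ B satisfies |β| ≥ |α|, and every β ∈ B with |β| = |α| admits an index k ∈ {1,…,m} with β_k < α_k and β_i = α_i for all i > k (i.e., the monomial with exponent α is minimal with respect to the graded reverse lexicographic order among the exponents in {α} ∪ B). Then there is no infinite sequence e^{(1)}, e^{(2)}, e^{(3)}, … of vectors in ℕ^m, all of whose coordinates are strictly positive, such that for every i ≥ 1 there exists β ∈ B with e^{(i+1)}_l = α_l + e^{(i)}_l − β_l for all l ∈ {1,…,m}. -/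
/-- **Termination of the simplified algebraic-dependence decomposition.** Let `m ≥ 1`,
`α ∈ ℕ^m`, and let `B ⊆ ℕ^m` be a finite set with `α ∉ B` such that every `β ∈ B` satisfies
`|β| ≥ |α|`, and every `β ∈ B` with `|β| = |α|` admits an index `k` with `β_k < α_k` and
`β_i = α_i` for all `i > k` (i.e. `α` is grevlex-minimal in `{α} ∪ B`).  Then there is no
infinite sequence `e⁽¹⁾, e⁽²⁾, …` of vectors in `ℕ^m` with all coordinates strictly positive
such that for each `i` there is `β ∈ B` with `e⁽ⁱ⁺¹⁾_l = α_l + e⁽ⁱ⁾_l − β_l` for all `l`. -/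
theorem simplified_algdep_termination {m : ℕ} (hm : 1 ≤ m)
    (α : Fin m → ℕ) (B : Finset (Fin m → ℕ)) (hαB : α ∉ B)
    (hdeg : ∀ β ∈ B, (∑ i, α i) ≤ ∑ i, β i)
    (hgrevlex : ∀ β ∈ B, (∑ i, β i) = (∑ i, α i) →
      ∃ k : Fin m, β k < α k ∧ ∀ i : Fin m, k < i → β i = α i) :
    ¬ ∃ e : ℕ → (Fin m → ℕ),
        (∀ n l, 0 < e n l) ∧
        (∀ n, ∃ β ∈ B, ∀ l, e (n + 1) l + β l = α l + e n l) := by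
  rintro ⟨e, -, hstep⟩
  let f : ℕ → ℕᵒᵈ ×ₗ Lex (Fin m → ℕ) := fun n =>
    toLex (OrderDual.toDual (∑ i, e n i), toLex (fun i => e n (Fin.rev i)))
  have hsum : ∀ n, ∃ β ∈ B, (∀ l, e (n + 1) l + β l = α l + e n l) ∧
      (∑ i, e (n + 1) i) + ∑ i, β i = ∑ i, α i + ∑ i, e n i := by
    intro n
    obtain ⟨β, hβ, h⟩ := hstep n
    refine ⟨β, hβ, h, ?_⟩
    rw [← Finset.sum_add_distrib, ← Finset.sum_add_distrib]
    exact Finset.sum_congr rfl (fun l _ => h l)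
  have hf : StrictMono f := by
    apply strictMono_nat_of_lt_succ
    intro n
    obtain ⟨β, hβ, h, hs⟩ := hsum n
    have hd := hdeg β hβ
    rw [Prod.Lex.lt_iff]
    rcases hd.lt_or_eq with hlt | heq
    · left
      change (∑ i, e (n + 1) i) < ∑ i, e n i
      omega
    · right
      refine ⟨?_, ?_⟩
      · change (∑ i, e n i) = ∑ i, e (n + 1) i
        omega
      · obtain ⟨k, hk, hk'⟩ := hgrevlex β hβ heq.symm
        refine ⟨Fin.rev k, ?_, ?_⟩
        · intro j hj
          change e n (Fin.rev j) = e (n + 1) (Fin.rev j)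
          have h1 := hk' (Fin.rev j) (by rw [← Fin.rev_lt_rev]; simpa using hj)
          have h2 := h (Fin.rev j)
          omega
        · change e n (Fin.rev (Fin.rev k)) < e (n + 1) (Fin.rev (Fin.rev k))
          rw [Fin.rev_rev]
          have h2 := h k
          omega
  have hinj : Function.Injective e := by
    intro a b hab
    apply hf.injective
    simp only [f, hab]
  have hanti : Antitone (fun n => ∑ i, e n i) := by
    apply antitone_nat_of_succ_le
    intro n
    obtain ⟨β, hβ, h, hs⟩ := hsum n
    have hd := hdeg β hβ
    change (∑ i, e (n + 1) i) ≤ ∑ i, e n i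
    omega
  have hfin : (Set.Iic (fun _ : Fin m => ∑ i, e 0 i)).Finite := Set.finite_Iic _
  refine Set.infinite_range_of_injective hinj (hfin.subset ?_)
  rintro _ ⟨n, rfl⟩ l
  exact (Finset.single_le_sum (fun i _ => Nat.zero_le (e n i)) (Finset.mem_univ l)).trans
    (hanti (Nat.zero_le n))
end
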